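/- Let $0 < \alpha < 1$, set $\delta = 1 - \alpha$, and let $(\Omega, \mathcal{F}, P)$ be a probability space carrying, for each $n \geq 2$, a random variable $X_n$ (the degree of a fixed vertex $v$ in the random intersection graph $G(n, m_n, p_n)$ with $p_n = (m_n n^{\alpha})^{-1/2}$) whose distribution is binomial $\mathrm{Bin}(n-1, q_n)$, where $q_n = 1 - (1 - p_n^2)^{m_n}$ and $m_n \geq 1$. Let $c > 0$ and let $a = a(c) \in (1,\infty)$ be the root of $a \log a - a + 1 = c$ in $(1,\infty)$. Then $P[X_n \geq a\, n^{\delta} \text{ for infinitely many } n] = 0$; in particular, almost surely $\liminf_{n \to \infty} X_n / n^{\delta} \leq a$. -/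

import Mathlib

open MeasureTheory Filter

/-!
The exponential moment of order `log a` of a `Bin(N, q)` variable is
`(1 + q (a - 1)) ^ N ≤ exp (N q (a - 1))`, so for `N q ≤ μ` Chernoff's bound gives
`P[X ≥ a μ] ≤ exp (-(a log a - a + 1) μ)`. In the intersection graph Bernoulli's inequality gives
`qₙ ≤ mₙ pₙ² = n ^ (-α)`, so one may take `μₙ = n ^ δ`; the tail bounds are then summable and
Borel–Cantelli applies.
-/

section BinomialTail

open ProbabilityTheory InformationTheory unitInterval

variable {Ω : Type*} [MeasurableSpace Ω] {P : Measure Ω}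

lemma hasLaw_binomial_of_measure_singleton {X : Ω → ℕ} {N : ℕ} {q : I} (hX : AEMeasurable X P)
    (h : ∀ j, P {ω | X ω = j} =
      ENNReal.ofReal ((N.choose j : ℝ) * (q : ℝ) ^ j * (1 - q : ℝ) ^ (N - j))) :
    HasLaw X Bin(N, q) P where
  aemeasurable := hX
  map_eq := by
    refine Measure.ext_of_singleton fun j ↦ ?_
    rw [Measure.map_apply_of_aemeasurable hX (measurableSet_singleton j), binomial_singleton]
    exact h j

lemma mgf_natCast_binomial (N : ℕ) (q : I) (t : ℝ) :
    mgf ((↑) : ℕ → ℝ) Bin(N, q) t = (1 + q * (Real.exp t - 1)) ^ N := by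
  calc mgf ((↑) : ℕ → ℝ) Bin(N, q) t
      = ∑ k ∈ Finset.range (N + 1), (q * Real.exp t) ^ k * (1 - q : ℝ) ^ (N - k) * N.choose k := by
        rw [mgf, integral_binomial]
        refine Finset.sum_congr (by ext; simp) fun k _ ↦ ?_
        rw [mul_comm t, Real.exp_nat_mul, mul_pow, smul_eq_mul]
        ring
    _ = (1 + q * (Real.exp t - 1)) ^ N := by
        rw [← add_pow]
        ring

lemma mgf_natCast_binomial_le_exp (N : ℕ) (q : I) (t : ℝ) :
    mgf ((↑) : ℕ → ℝ) Bin(N, q) t ≤ Real.exp (N * q * (Real.exp t - 1)) := by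
  have base_nonneg : 0 ≤ 1 + q * (Real.exp t - 1) := by
    linarith [q.2.2, mul_nonneg q.2.1 (Real.exp_pos t).le]
  rw [mgf_natCast_binomial, mul_assoc, Real.exp_nat_mul, add_comm]
  exact pow_le_pow_left₀ (by linarith) (Real.add_one_le_exp _) N

lemma binomial_real_ge_mul_le_exp_neg_klFun {N : ℕ} {q : I} {μ a : ℝ} (hμ : (N : ℝ) * q ≤ μ)
    (ha : 1 ≤ a) :
    Bin(N, q).real {k : ℕ | a * μ ≤ k} ≤ Real.exp (-klFun a * μ) := by
  calc Bin(N, q).real {k : ℕ | a * μ ≤ k}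
      ≤ Real.exp (-Real.log a * (a * μ)) * mgf ((↑) : ℕ → ℝ) Bin(N, q) (Real.log a) :=
        measure_ge_le_exp_mul_mgf _ (Real.log_nonneg ha) (integrable_binomial _)
    _ ≤ Real.exp (-Real.log a * (a * μ)) * Real.exp (N * q * (a - 1)) := by
        gcongr
        simpa only [Real.exp_log (zero_lt_one.trans_le ha)] using
          mgf_natCast_binomial_le_exp N q (Real.log a)
    _ ≤ Real.exp (-klFun a * μ) := by
        rw [← Real.exp_add, Real.exp_le_exp, klFun_apply]
        linarith [mul_le_mul_of_nonneg_right hμ (sub_nonneg.2 ha)]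

end BinomialTail

section BorelCantelli

variable {Ω : Type*} [MeasurableSpace Ω] {P : Measure Ω}

lemma measure_limsup_atTop_eq_zero_of_eventually_le {s : ℕ → Set Ω} {u : ℕ → ℝ} (hu : Summable u)
    (h : ∀ᶠ n in atTop, P (s n) ≤ ENNReal.ofReal (u n)) : P (limsup s atTop) = 0 := by
  obtain ⟨k, hk⟩ := eventually_atTop.1 h
  rw [← limsup_nat_add s k]
  refine measure_limsup_atTop_eq_zero (ne_top_of_le_ne_top ?_
    (ENNReal.tsum_le_tsum fun n ↦ hk (n + k) (Nat.le_add_left k n)))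
  exact ((summable_nat_add_iff k).2 hu).tsum_ofReal_ne_top

lemma ae_liminf_div_le_of_measure_limsup_eq_zero {X : ℕ → Ω → ℝ} {b : ℕ → ℝ} {a : ℝ}
    (hX : ∀ n ω, 0 ≤ X n ω) (hb : ∀ᶠ n in atTop, 0 < b n)
    (h : P (limsup (fun n ↦ {ω | a * b n ≤ X n ω}) atTop) = 0) :
    ∀ᵐ ω ∂P, liminf (fun n ↦ X n ω / b n) atTop ≤ a := by
  filter_upwards [measure_eq_zero_iff_ae_notMem.1 h] with ω hω
  have eventually_lt : ∀ᶠ n in atTop, X n ω < a * b n := by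
    simpa only [mem_limsup_iff_frequently_mem, not_frequently, Set.mem_ofPred_eq, not_le] using hω
  refine liminf_le_of_frequently_le (Eventually.frequently ?_)
    (isBoundedUnder_of_eventually_ge (a := 0) ?_)
  · filter_upwards [eventually_lt, hb] with n hn hbn
    exact (div_le_iff₀ hbn).2 hn.le
  · filter_upwards [hb] with n hbn
    exact div_nonneg (hX n ω) hbn.le

end BorelCantelli

section RandomIntersectionGraph

open unitInterval

/-- The probability that two given vertices of the random intersection graph `G(n, m, p)` are
adjacent: each of the `m` objects is common to both with probability `p ^ 2`. It is an element of
the unit interval, where `σ x = 1 - x`, so that it can serve as a parameter of `Bin`. -/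
def edgeProb (m : ℕ) (p : I) : I := σ (σ (p ^ 2) ^ m)

lemma coe_edgeProb (m : ℕ) (p : I) : (edgeProb m p : ℝ) = 1 - (1 - (p : ℝ) ^ 2) ^ m := by
  simp only [edgeProb, coe_symm_eq, Set.Icc.coe_pow]

lemma edgeProb_le_mul_sq (m : ℕ) (p : I) : (edgeProb m p : ℝ) ≤ m * (p : ℝ) ^ 2 := by
  have bernoulli := one_add_mul_le_pow (a := -(p : ℝ) ^ 2) (by nlinarith [p.2.1, p.2.2]) m
  rw [coe_edgeProb, sub_eq_add_neg 1 ((p : ℝ) ^ 2)]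
  linarith

lemma mul_natCast_rpow_rpow_neg_half_mem_unitInterval {α : ℝ} (hα : 0 < α) (m n : ℕ) :
    ((m : ℝ) * (n : ℝ) ^ α) ^ (-(1 / 2) : ℝ) ∈ I := by
  refine ⟨by positivity, ?_⟩
  rcases m.eq_zero_or_pos with rfl | hm
  · simp
  rcases n.eq_zero_or_pos with rfl | hn
  · simp [hα.ne']
  have one_le : 1 ≤ (m : ℝ) * (n : ℝ) ^ α := one_le_mul_of_one_le_of_one_le
    (Nat.one_le_cast.2 hm) (Real.one_le_rpow (Nat.one_le_cast.2 hn) hα.le)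
  exact Real.rpow_le_one_of_one_le_of_nonpos one_le (by norm_num)

lemma rpow_neg_half_sq {x : ℝ} (hx : 0 ≤ x) : (x ^ (-(1 / 2) : ℝ)) ^ 2 = x⁻¹ := by
  rw [← Real.rpow_mul_natCast hx, ← Real.rpow_neg_one]
  norm_num

lemma natCast_mul_edgeProb_le_rpow {α : ℝ} {m n : ℕ} {p : I}
    (hp : (p : ℝ) = ((m : ℝ) * (n : ℝ) ^ α) ^ (-(1 / 2) : ℝ)) :
    (n : ℝ) * edgeProb m p ≤ (n : ℝ) ^ (1 - α) := by
  rcases n.eq_zero_or_pos with rfl | hn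
  · simpa only [Nat.cast_zero, zero_mul] using Real.zero_rpow_nonneg (1 - α)
  calc (n : ℝ) * edgeProb m p
      ≤ n * (m * (p : ℝ) ^ 2) := by gcongr; exact edgeProb_le_mul_sq m p
    _ = m * (m : ℝ)⁻¹ * (n / (n : ℝ) ^ α) := by
        rw [hp, rpow_neg_half_sq (by positivity), mul_inv]
        ring
    _ ≤ n / (n : ℝ) ^ α := mul_le_of_le_one_left (by positivity) mul_inv_le_one
    _ = (n : ℝ) ^ (1 - α) := by rw [Real.rpow_sub (Nat.cast_pos.2 hn), Real.rpow_one]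

end RandomIntersectionGraph

lemma summable_exp_neg_mul_natCast_rpow {k δ : ℝ} (hk : 0 < k) (hδ : 0 < δ) :
    Summable fun n : ℕ ↦ Real.exp (-k * (n : ℝ) ^ δ) := by
  have rpow_tendsto : Tendsto (fun n : ℕ ↦ (n : ℝ) ^ δ) atTop atTop :=
    (tendsto_rpow_atTop hδ).comp tendsto_natCast_atTop_atTop
  have exp_isBigO := (isLittleO_exp_neg_mul_rpow_atTop hk (-2 / δ)).isBigO.comp_tendsto rpow_tendsto
  refine summable_of_isBigO_nat (Real.summable_nat_rpow.2 (by norm_num : (-2 : ℝ) < -1))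
    (exp_isBigO.congr_right fun n ↦ ?_)
  rw [Function.comp_apply, ← Real.rpow_mul (Nat.cast_nonneg n), mul_div_cancel₀ _ hδ.ne']

section BinomialSequence

open ProbabilityTheory InformationTheory unitInterval

theorem stmt_16_general {Ω : Type*} [MeasurableSpace Ω] {P : Measure Ω} {X : ℕ → Ω → ℕ}
    {N : ℕ → ℕ} {q : ℕ → I} {μ : ℕ → ℝ} {a : ℝ}
    (hX : ∀ᶠ n in atTop, HasLaw (X n) Bin(N n, q n) P)
    (hμ : ∀ᶠ n in atTop, (N n : ℝ) * q n ≤ μ n) (ha : 1 ≤ a)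
    (hsum : Summable fun n ↦ Real.exp (-klFun a * μ n)) :
    P (limsup (fun n ↦ {ω | a * μ n ≤ (X n ω : ℝ)}) atTop) = 0 ∧
      ∀ᵐ ω ∂P, liminf (fun n ↦ (X n ω : ℝ) / μ n) atTop ≤ a := by
  have tail_le : ∀ᶠ n in atTop,
      P {ω | a * μ n ≤ (X n ω : ℝ)} ≤ ENNReal.ofReal (Real.exp (-klFun a * μ n)) := by
    filter_upwards [hX, hμ] with n hXn hμn
    rw [hXn.measure_eq (p := fun k ↦ a * μ n ≤ (k : ℝ)) .of_discrete, ← ofReal_measureReal]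
    exact ENNReal.ofReal_le_ofReal (binomial_real_ge_mul_le_exp_neg_klFun hμn ha)
  have μ_pos : ∀ᶠ n in atTop, 0 < μ n := by
    filter_upwards [hsum.tendsto_atTop_zero.eventually_lt_const zero_lt_one] with n hn
    rw [Real.exp_lt_one_iff, neg_mul, neg_lt_zero] at hn
    exact pos_of_mul_pos_right hn (klFun_nonneg (zero_le_one.trans ha))
  have limsup_null := measure_limsup_atTop_eq_zero_of_eventually_le hsum tail_le
  exact ⟨limsup_null, ae_liminf_div_le_of_measure_limsup_eq_zero
    (fun n ω ↦ (X n ω).cast_nonneg) μ_pos limsup_null⟩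

end BinomialSequence

/-- Let `0 < α < 1`, `δ = 1 - α`, and for each `n ≥ 2` let `X n` be the degree of a
fixed vertex of the random intersection graph `G(n, mₙ, pₙ)` with
`pₙ = (mₙ n^α)^{-1/2}`, i.e. a `Bin(n-1, qₙ)`-distributed random variable with
`qₙ = 1 - (1 - pₙ²)^{mₙ}`.  If `c > 0` and `a = a(c) ∈ (1,∞)` is the root of
`a log a - a + 1 = c`, then `P[Xₙ ≥ a n^δ i.o.] = 0`; in particular, almost surely
`liminfₙ Xₙ / n^δ ≤ a`. -/
theorem stmt_16 (α δ : ℝ) (hα0 : 0 < α) (hα1 : α < 1) (hδ : δ = 1 - α)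
    (Ω : Type) [MeasurableSpace Ω] (P : Measure Ω) [IsProbabilityMeasure P]
    (m : ℕ → ℕ) (hm : ∀ n, 1 ≤ m n)
    (p q : ℕ → ℝ)
    (hp : ∀ n, p n = ((m n : ℝ) * (n : ℝ) ^ α) ^ (-(1 / 2) : ℝ))
    (hq : ∀ n, q n = 1 - (1 - p n ^ 2) ^ m n)
    (X : ℕ → Ω → ℕ) (hX : ∀ n, Measurable (X n))
    (hdist : ∀ n, 2 ≤ n → ∀ j : ℕ,
      P {ω | X n ω = j} =
        ENNReal.ofReal (((n - 1).choose j : ℝ) * q n ^ j * (1 - q n) ^ (n - 1 - j)))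
    (c a : ℝ) (hc0 : 0 < c) (ha1 : 1 < a)
    (hac : a * Real.log a - a + 1 = c) :
    P (limsup (fun n : ℕ => {ω | a * (n : ℝ) ^ δ ≤ (X n ω : ℝ)}) atTop) = 0 ∧
      ∀ᵐ ω ∂P, liminf (fun n : ℕ => (X n ω : ℝ) / (n : ℝ) ^ δ) atTop ≤ a := by
  have p_mem : ∀ n, p n ∈ unitInterval := fun n ↦
    hp n ▸ mul_natCast_rpow_rpow_neg_half_mem_unitInterval hα0 (m n) n
  let r : ℕ → unitInterval := fun n ↦ edgeProb (m n) ⟨p n, p_mem n⟩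
  have r_eq : ∀ n, (r n : ℝ) = q n := fun n ↦ (coe_edgeProb _ _).trans (hq n).symm
  have degree_law : ∀ᶠ n in atTop,
      ProbabilityTheory.HasLaw (X n) (ProbabilityTheory.binomial (n - 1) (r n)) P := by
    filter_upwards [eventually_ge_atTop 2] with n hn
    exact hasLaw_binomial_of_measure_singleton (hX n).aemeasurable
      (by simpa only [r_eq] using hdist n hn)
  have mean_degree_le : ∀ n : ℕ, ((n - 1 : ℕ) : ℝ) * r n ≤ (n : ℝ) ^ δ := fun n ↦
    calc ((n - 1 : ℕ) : ℝ) * r n ≤ n * r n :=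
          mul_le_mul_of_nonneg_right (Nat.cast_le.2 (n.sub_le 1)) (r n).2.1
      _ ≤ (n : ℝ) ^ δ := hδ ▸ natCast_mul_edgeProb_le_rpow (hp n)
  have rate_pos : 0 < InformationTheory.klFun a := by
    rw [InformationTheory.klFun_apply]
    linarith
  exact stmt_16_general degree_law (.of_forall mean_degree_le) ha1.le
    (summable_exp_neg_mul_natCast_rpow rate_pos (by linarith))
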